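/- Let A be an abelian group and let ∧²A denote the quotient of A ⊗_ℤ A by the subgroup generated by all elements a⊗a. The projection A → A/2A induces a surjective homomorphism ∧²A → ∧²(A/2A) whose kernel is 2·(∧²A); consequently there is an isomorphism (∧²A) ⊗ ℤ/2 ≅ ∧²(A/2A). -/

import Mathlib

open scoped TensorProduct

noncomputable section

/-- The subgroup of `A ⊗ A` generated by the elements `a ⊗ a`. -/
def diagSub (A : Type*) [AddCommGroup A] : AddSubgroup (TensorProduct ℤ A A) :=
  AddSubgroup.closure {x | ∃ a : A, x = a ⊗ₜ[ℤ] a}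

/-- The exterior square `∧²A = (A ⊗ A)/⟨a ⊗ a⟩` of an abelian group `A`. -/
abbrev extSq (A : Type*) [AddCommGroup A] :=
  TensorProduct ℤ A A ⧸ diagSub A

/-- The subgroup `2A` of `A`. -/
def twoSub (A : Type*) [AddCommGroup A] : AddSubgroup A :=
  AddSubgroup.closure {x | ∃ a : A, x = a + a}

/-!
Tensoring is right exact, so for a surjection `f : A → B` the kernel of `f ⊗ f` is spanned by the
images of `A ⊗ ker f` and `ker f ⊗ A`; when `ker f = nA`, both are `n(A ⊗ A)`. A surjection `f`
also maps the diagonal subgroup of `A ⊗ A` onto that of `B ⊗ B`, so passing to the quotients adds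
nothing to the kernel beyond the image of `ker (f ⊗ f)`, and `∧²A → ∧²B` has kernel `n(∧²A)`.
-/

theorem twoSub_eq_range_nsmul (A : Type*) [AddCommGroup A] :
    twoSub A = (nsmulAddMonoidHom 2 : A →+ A).range := by
  have doubles_eq : {x : A | ∃ a, x = a + a} = (nsmulAddMonoidHom 2 : A →+ A).range := by
    ext x
    simp [two_nsmul, eq_comm]
  rw [twoSub, doubles_eq, AddSubgroup.closure_eq]

section

variable {A B : Type*} [AddCommGroup A] [AddCommGroup B]

theorem map_range_nsmul_of_surjective {f : A →+ B} (hf : Function.Surjective f) (n : ℕ) :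
    (nsmulAddMonoidHom n : A →+ A).range.map f = (nsmulAddMonoidHom n : B →+ B).range := by
  have comm : f.comp (nsmulAddMonoidHom n) = (nsmulAddMonoidHom n).comp f := by
    ext a
    simp
  rw [AddMonoidHom.map_range, comm, AddMonoidHom.range_comp,
    AddMonoidHom.range_eq_top_of_surjective f hf, ← AddMonoidHom.range_eq_map]

/-- The homomorphism `f ⊗ f : A ⊗ A → B ⊗ B` of abelian groups induced by `f : A → B`. -/
def tensorSqMap (f : A →+ B) : A ⊗[ℤ] A →+ B ⊗[ℤ] B :=
  (TensorProduct.map f.toIntLinearMap f.toIntLinearMap).toAddMonoidHom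

theorem tensorSqMap_tmul (f : A →+ B) (a b : A) :
    tensorSqMap f (a ⊗ₜ[ℤ] b) = f a ⊗ₜ[ℤ] f b :=
  rfl

theorem tensorSqMap_surjective {f : A →+ B} (hf : Function.Surjective f) :
    Function.Surjective (tensorSqMap f) :=
  TensorProduct.map_surjective hf hf

theorem ker_tensorSqMap_eq_range_nsmul {f : A →+ B} (hf : Function.Surjective f) {n : ℕ}
    (hker : f.ker = (nsmulAddMonoidHom n : A →+ A).range) :
    (tensorSqMap f).ker = (nsmulAddMonoidHom n : A ⊗[ℤ] A →+ A ⊗[ℤ] A).range := by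
  have exact_smul : Function.Exact ((n : ℤ) • (LinearMap.id : A →ₗ[ℤ] A)) f.toIntLinearMap := by
    intro a
    simpa using SetLike.ext_iff.mp hker a
  have ker_map := TensorProduct.map_ker exact_smul hf exact_smul hf
  rw [LinearMap.lTensor_smul, LinearMap.rTensor_smul, LinearMap.lTensor_id, LinearMap.rTensor_id,
    sup_idem] at ker_map
  ext t
  simpa [tensorSqMap] using SetLike.ext_iff.mp ker_map t

theorem map_tensorSqMap_diagSub_le (f : A →+ B) : (diagSub A).map (tensorSqMap f) ≤ diagSub B := by
  rw [diagSub, AddMonoidHom.map_closure, AddSubgroup.closure_le]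
  rintro _ ⟨_, ⟨a, rfl⟩, rfl⟩
  exact AddSubgroup.subset_closure ⟨f a, tensorSqMap_tmul f a a⟩

theorem map_tensorSqMap_diagSub {f : A →+ B} (hf : Function.Surjective f) :
    (diagSub A).map (tensorSqMap f) = diagSub B := by
  refine le_antisymm (map_tensorSqMap_diagSub_le f) ((AddSubgroup.closure_le _).mpr ?_)
  rintro _ ⟨b, rfl⟩
  obtain ⟨a, rfl⟩ := hf b
  exact ⟨a ⊗ₜ a, AddSubgroup.subset_closure ⟨a, rfl⟩, tensorSqMap_tmul f a a⟩

/-- The homomorphism `∧²A → ∧²B`, `a ∧ b ↦ f a ∧ f b`, induced by `f : A → B`. -/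
def extSqMap (f : A →+ B) : extSq A →+ extSq B :=
  QuotientAddGroup.map (diagSub A) (diagSub B) (tensorSqMap f)
    (AddSubgroup.map_le_iff_le_comap.mp (map_tensorSqMap_diagSub_le f))

theorem extSqMap_mk_tmul (f : A →+ B) (a b : A) :
    extSqMap f (QuotientAddGroup.mk (a ⊗ₜ[ℤ] b)) = QuotientAddGroup.mk (f a ⊗ₜ[ℤ] f b) :=
  rfl

theorem extSqMap_surjective {f : A →+ B} (hf : Function.Surjective f) :
    Function.Surjective (extSqMap f) :=
  QuotientAddGroup.map_surjective_of_surjective _ _ _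
    ((QuotientAddGroup.mk'_surjective _).comp (tensorSqMap_surjective hf)) _

theorem ker_extSqMap {f : A →+ B} (hf : Function.Surjective f) :
    (extSqMap f).ker = (tensorSqMap f).ker.map (QuotientAddGroup.mk' (diagSub A)) := by
  rw [extSqMap, QuotientAddGroup.ker_map, ← map_tensorSqMap_diagSub hf, AddSubgroup.comap_map_eq,
    AddSubgroup.map_sup, QuotientAddGroup.map_mk'_self, bot_sup_eq]

theorem ker_extSqMap_eq_range_nsmul {f : A →+ B} (hf : Function.Surjective f) {n : ℕ}
    (hker : f.ker = (nsmulAddMonoidHom n : A →+ A).range) :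
    (extSqMap f).ker = (nsmulAddMonoidHom n : extSq A →+ extSq A).range := by
  rw [ker_extSqMap hf, ker_tensorSqMap_eq_range_nsmul hf hker,
    map_range_nsmul_of_surjective (QuotientAddGroup.mk'_surjective _)]

/-- The isomorphism `A ⊗ ℤ/n ≅ B`, `a ⊗ k ↦ k • f a`, for `f : A → B` surjective with kernel `nA`,
as the composite `A ⊗ ℤ/n ≅ A/nA = A/ker f ≅ B`. -/
def tensorZModEquivOfKerEq {f : A →+ B} (hf : Function.Surjective f) {n : ℕ}
    (hker : f.ker = (nsmulAddMonoidHom n : A →+ A).range) :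
    A ⊗[ℤ] ZMod n ≃+ B :=
  have smul_top_eq_ker :
      Ideal.span {(n : ℤ)} • (⊤ : Submodule ℤ A) = LinearMap.ker f.toIntLinearMap := by
    ext a
    rw [LinearMap.mem_ker]
    simpa [Submodule.ideal_span_singleton_smul, Submodule.mem_smul_pointwise_iff_exists] using
      (SetLike.ext_iff.mp hker a).symm
  ((Int.quotientSpanNatEquivZMod n).symm.toAddEquiv.toIntLinearEquiv.lTensor A ≪≫ₗ
    TensorProduct.tensorQuotEquivQuotSMul A (Ideal.span {(n : ℤ)}) ≪≫ₗ
    Submodule.quotEquivOfEq _ _ smul_top_eq_ker ≪≫ₗ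
    f.toIntLinearMap.quotKerEquivOfSurjective hf).toAddEquiv

theorem stmt_13_general {f : A →+ B} (hf : Function.Surjective f) {n : ℕ}
    (hker : f.ker = (nsmulAddMonoidHom n : A →+ A).range) :
    ∃ φ : extSq A →+ extSq B,
      (∀ a b : A,
        φ (QuotientAddGroup.mk (a ⊗ₜ[ℤ] b)) = QuotientAddGroup.mk (f a ⊗ₜ[ℤ] f b)) ∧
      Function.Surjective φ ∧
      (∀ x : extSq A, φ x = 0 ↔ ∃ y : extSq A, x = n • y) ∧
      Nonempty (extSq A ⊗[ℤ] ZMod n ≃+ extSq B) := by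
  have φ_surjective := extSqMap_surjective hf
  have ker_φ := ker_extSqMap_eq_range_nsmul hf hker
  refine ⟨extSqMap f, extSqMap_mk_tmul f, φ_surjective, fun x => ?_,
    ⟨tensorZModEquivOfKerEq φ_surjective ker_φ⟩⟩
  simpa [eq_comm] using SetLike.ext_iff.mp ker_φ x

end

/-- The projection `A → A/2A` induces a surjection `∧²A → ∧²(A/2A)` with kernel `2·∧²A`;
consequently `(∧²A) ⊗ ℤ/2 ≅ ∧²(A/2A)`. -/
theorem stmt_13 {A : Type*} [AddCommGroup A] :
    ∃ φ : extSq A →+ extSq (A ⧸ twoSub A),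
      (∀ a b : A,
        φ (QuotientAddGroup.mk (a ⊗ₜ[ℤ] b)) =
          QuotientAddGroup.mk ((QuotientAddGroup.mk a : A ⧸ twoSub A) ⊗ₜ[ℤ]
            (QuotientAddGroup.mk b : A ⧸ twoSub A))) ∧
      Function.Surjective φ ∧
      (∀ x : extSq A, φ x = 0 ↔ ∃ y : extSq A, x = y + y) ∧
      Nonempty (TensorProduct ℤ (extSq A) (ZMod 2) ≃+ extSq (A ⧸ twoSub A)) := by
  simpa only [two_nsmul, QuotientAddGroup.mk'_apply] using
    stmt_13_general (QuotientAddGroup.mk'_surjective (twoSub A))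
      ((QuotientAddGroup.ker_mk' _).trans (twoSub_eq_range_nsmul A))

end
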